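/- arXiv:1503.05704 — 7 statements merged into one kernel-verified Lean document; each statement's English description precedes it below -/
import Mathlib

section
/- Let q ≥ 1 and let C be a Z_q-linear code of length n (a ZMod q-submodule of Fin n → ZMod q). Then the set D = { ĉ + α • v* : c ∈ C, α ∈ ZMod q } is a ZMod q-submodule of Fin (q*n+1) → ZMod q, and its cardinality equals q times the cardinality of C. -/
/-- `chat q n c` is the word `(c, 0, c, c, …, c)` of length `q*n + 1`: a copy of `c`, then a
single `0` coordinate, then `q - 1` further copies of `c`. -/
def chat (q n : ℕ) (c : Fin n → ZMod q) : Fin (q * n + 1) → ZMod q := fun i =>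
  if h1 : (i : ℕ) = n then 0
  else if h2 : (i : ℕ) < n then c ⟨(i : ℕ), h2⟩
  else c ⟨((i : ℕ) - 1) % n, by
    rcases Nat.eq_zero_or_pos n with h0 | h0
    · subst h0; have := i.isLt; simp at this; omega
    · exact Nat.mod_lt _ h0⟩

/-- `vstar q n` is the word `(0,…,0, 1, 1,…,1, 2,…,2, …, q-1,…,q-1)` of length `q*n + 1`:
`n` zeros, a single `1`, and then for each `j = 1, …, q-1` a block of `n` coordinates equal
to `j`. -/
def vstar (q n : ℕ) : Fin (q * n + 1) → ZMod q := fun i =>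
  if (i : ℕ) < n then 0
  else if (i : ℕ) = n then 1
  else ((((i : ℕ) - 1) / n : ℕ) : ZMod q)

/-!
`(c, α) ↦ ĉ + α • v*` is linear, so `D` is the image of the submodule `C × ZMod q`. The map is
injective because the first `n + 1` coordinates of `ĉ + α • v*` are `(c, α)`.
-/

section General

variable {R M N : Type*} [Semiring R] [AddCommMonoid M] [AddCommMonoid N] [Module R M] [Module R N]

lemma coe_map_coprod_toSpanSingleton_prod_top (f : M →ₗ[R] N) (v : N) (C : Submodule R M) :
    ((C.prod ⊤).map (f.coprod (LinearMap.toSpanSingleton R N v)) : Set N) =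
      {w | ∃ c ∈ C, ∃ α : R, w = f c + α • v} := by
  ext w
  simp [Submodule.mem_sup, eq_comm]

lemma ncard_map_prod_top_of_injective {g : M × R →ₗ[R] N} (hg : Function.Injective g)
    (C : Submodule R M) :
    ((C.prod ⊤).map g : Set N).ncard = Nat.card R * (C : Set M).ncard := by
  rw [Submodule.map_coe, Set.ncard_image_of_injective _ hg, Submodule.prod_coe, Set.ncard_prod,
    Submodule.top_coe, Set.ncard_univ, mul_comm]

end General

section Coordinates

variable {q n : ℕ} {i : Fin (q * n + 1)}

lemma chat_apply_of_lt (c : Fin n → ZMod q) (hi : (i : ℕ) < n) : chat q n c i = c ⟨i, hi⟩ := by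
  simp [chat, hi, hi.ne]

lemma chat_apply_of_eq (c : Fin n → ZMod q) (hi : (i : ℕ) = n) : chat q n c i = 0 := by
  simp [chat, hi]

lemma vstar_apply_of_lt (hi : (i : ℕ) < n) : vstar q n i = 0 := by
  simp [vstar, hi]

lemma vstar_apply_of_eq (hi : (i : ℕ) = n) : vstar q n i = 1 := by
  simp [vstar, hi]

end Coordinates

/-- The map `c ↦ ĉ` as a linear map. -/
def chatLinearMap (q n : ℕ) : (Fin n → ZMod q) →ₗ[ZMod q] (Fin (q * n + 1) → ZMod q) where
  toFun := chat q n
  map_add' c d := by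
    ext i
    simp only [chat, Pi.add_apply]
    split_ifs <;> simp
  map_smul' a c := by
    ext i
    simp only [chat, Pi.smul_apply]
    split_ifs <;> simp

/-- The linear map `(c, α) ↦ ĉ + α • v*`, which parametrizes the words of `D`. -/
def chatAddSMulVstar (q n : ℕ) :
    (Fin n → ZMod q) × ZMod q →ₗ[ZMod q] (Fin (q * n + 1) → ZMod q) :=
  (chatLinearMap q n).coprod (LinearMap.toSpanSingleton (ZMod q) _ (vstar q n))

section ChatAddSMulVstar

variable {q n : ℕ} {i : Fin (q * n + 1)}

lemma chatAddSMulVstar_apply_of_lt (p : (Fin n → ZMod q) × ZMod q) (hi : (i : ℕ) < n) :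
    chatAddSMulVstar q n p i = p.1 ⟨i, hi⟩ := by
  simp [chatAddSMulVstar, chatLinearMap, chat_apply_of_lt _ hi, vstar_apply_of_lt hi]

lemma chatAddSMulVstar_apply_of_eq (p : (Fin n → ZMod q) × ZMod q) (hi : (i : ℕ) = n) :
    chatAddSMulVstar q n p i = p.2 := by
  simp [chatAddSMulVstar, chatLinearMap, chat_apply_of_eq _ hi, vstar_apply_of_eq hi]

lemma chatAddSMulVstar_injective (hq : 1 ≤ q) : Function.Injective (chatAddSMulVstar q n) := by
  have hn : n < q * n + 1 := Nat.lt_succ_of_le (Nat.le_mul_of_pos_left n hq)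
  let firstCoords (w : Fin (q * n + 1) → ZMod q) : (Fin n → ZMod q) × ZMod q :=
    (fun i ↦ w ⟨i, i.isLt.trans hn⟩, w ⟨n, hn⟩)
  have left_inv : Function.LeftInverse firstCoords (chatAddSMulVstar q n) := fun p ↦
    Prod.ext (funext fun i ↦ chatAddSMulVstar_apply_of_lt p i.isLt)
      (chatAddSMulVstar_apply_of_eq p rfl)
  exact left_inv.injective

end ChatAddSMulVstar

/-- The set `D = { ĉ + α • v* : c ∈ C, α ∈ ZMod q }` is a `ZMod q`-submodule of
`Fin (q*n+1) → ZMod q`, and its cardinality is `q` times the cardinality of `C`. -/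
theorem D_submodule_and_card (q n : ℕ) (hq : 1 ≤ q)
    (C : Submodule (ZMod q) (Fin n → ZMod q)) :
    (∃ D : Submodule (ZMod q) (Fin (q * n + 1) → ZMod q),
        (D : Set (Fin (q * n + 1) → ZMod q)) =
          {w | ∃ c ∈ C, ∃ α : ZMod q, w = chat q n c + α • vstar q n}) ∧
      Set.ncard {w | ∃ c ∈ C, ∃ α : ZMod q, w = chat q n c + α • vstar q n} =
        q * Set.ncard (C : Set (Fin n → ZMod q)) := by
  have coe_map : ((C.prod ⊤).map (chatAddSMulVstar q n) : Set (Fin (q * n + 1) → ZMod q)) =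
      {w | ∃ c ∈ C, ∃ α : ZMod q, w = chat q n c + α • vstar q n} :=
    coe_map_coprod_toSpanSingleton_prod_top (chatLinearMap q n) (vstar q n) C
  refine ⟨⟨_, coe_map⟩, ?_⟩
  rw [← coe_map, ncard_map_prod_top_of_injective (chatAddSMulVstar_injective hq), Nat.card_zmod]
end

section
/- Let q ≥ 2 be an even integer and let C be a Z_q-linear code of length n containing a nonzero word; let d be the minimum Hamming weight of the nonzero words of C. Suppose there exists c ∈ C all of whose coordinates lie in {0, q/2} (where q/2 is taken in ZMod q), and suppose n ≤ 2d - 1. Then the minimum Hamming weight of the nonzero words of D equals (q/2)·n + 1. -/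
/-- The Hamming weight of a word: the number of nonzero coordinates. -/
noncomputable def hwt {q : ℕ} {I : Type*} (x : I → ZMod q) : ℕ :=
  Set.ncard {i | x i ≠ 0}

/-!
Read a word `ĉ + α • v*` column by column: besides the isolated coordinate `α`, it consists of
the words `j ↦ c i + α * j` on `ZMod q`, one for each coordinate `i` of `c`. If `α = 0`, the weight
is `q * wt c`. If `α ≠ 0`, each column vanishes on the empty set or on a coset of the annihilator
of `α`, a proper subgroup, which has at most `q / p` elements for `p` the least prime factor of `q`;
so the weight is at least `(q - q / p) * n + 1`, and `c = 0`, `α = q / p` attains this bound.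
-/

/-- The Hamming weights of the nonzero words of a code. -/
def nonzeroWeights {q : ℕ} {I : Type*} (S : Set (I → ZMod q)) : Set ℕ :=
  {w | ∃ x ∈ S, x ≠ 0 ∧ w = hwt x}

/-- The code `D = {ĉ + α • v* : c ∈ C, α ∈ ZMod q}` built from an arbitrary set `C` of words. -/
def extendedCode {q n : ℕ} (C : Set (Fin n → ZMod q)) : Set (Fin (q * n + 1) → ZMod q) :=
  {w | ∃ c ∈ C, ∃ α : ZMod q, w = chat q n c + α • vstar q n}

theorem le_div_minFac_of_dvd_of_lt {g q : ℕ} (hdvd : g ∣ q) (hlt : g < q) :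
    g ≤ q / q.minFac := by
  obtain ⟨k, rfl⟩ := hdvd
  have hk : 2 ≤ k := by
    by_contra! hk
    interval_cases k <;> simp at hlt
  rw [Nat.le_div_iff_mul_le (Nat.minFac_pos _)]
  exact Nat.mul_le_mul_left g (Nat.minFac_le_of_dvd hk (dvd_mul_left k g))

theorem sub_div_minFac_of_even {q : ℕ} (hq : Even q) : q - q / q.minFac = q / 2 := by
  rw [(Nat.minFac_eq_two_iff q).2 hq.two_dvd]
  grind

theorem half_mul_lt_mul_of_even {q n w : ℕ} (hpos : 0 < q) (hq : Even q) (hlt : n < 2 * w) :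
    q / 2 * n < q * w :=
  calc q / 2 * n < q / 2 * (2 * w) := Nat.mul_lt_mul_of_pos_left hlt (by grind)
    _ = q * w := by rw [← mul_assoc, Nat.div_mul_cancel hq.two_dvd]

theorem ncard_add_mul_eq_zero_le {R : Type*} [NonUnitalNonAssocRing R] [Finite R] (a α : R) :
    {j | a + α * j = 0}.ncard ≤ {j | α * j = 0}.ncard := by
  rcases {j | a + α * j = 0}.eq_empty_or_nonempty with hempty | ⟨j₀, hj₀⟩
  · simp only [hempty, Set.ncard_empty, zero_le]
  · refine Set.ncard_le_ncard_of_injOn (· - j₀) (fun j hj ↦ ?_) sub_left_injective.injOn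
    calc α * (j - j₀) = (a + α * j) - (a + α * j₀) := by rw [mul_sub, add_sub_add_left_eq_sub]
      _ = 0 := by rw [hj, hj₀, sub_zero]

theorem chat_zero (q n : ℕ) : chat q n 0 = 0 := by
  ext i
  simp [chat]

section ZModWords

variable {q : ℕ}

theorem hwt_pos {I : Type*} [Finite I] {x : I → ZMod q} : 0 < hwt x ↔ x ≠ 0 := by
  rw [hwt, Set.ncard_pos, Function.ne_iff]
  rfl

theorem hwt_eq_sum {I : Type*} [Fintype I] (x : I → ZMod q) :
    hwt x = ∑ i, if x i ≠ 0 then 1 else 0 := by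
  rw [hwt, Set.ncard_eq_toFinset_card', Finset.sum_boole, Set.toFinset_ofPred, Nat.cast_id]

theorem hwt_eq_card_sub_ncard {I : Type*} [Finite I] (x : I → ZMod q) :
    hwt x = Nat.card I - {i | x i = 0}.ncard :=
  Set.ncard_compl {i | x i = 0}

theorem hwt_const {I : Type*} [Finite I] (a : ZMod q) :
    hwt (fun _ : I ↦ a) = Nat.card I * if a ≠ 0 then 1 else 0 := by
  by_cases ha : a = 0 <;> simp [hwt, ha, Set.ncard_univ]

variable [NeZero q]

theorem ncard_natCast_mul_eq_zero (k : ℕ) : {j : ZMod q | k * j = 0}.ncard = q.gcd k := by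
  have hker : {j : ZMod q | k * j = 0} = (nsmulAddMonoidHom k : ZMod q →+ ZMod q).ker := by
    ext j
    simp [AddMonoidHom.mem_ker]
  rw [hker, ← Nat.card_coe_set_eq]
  simpa using IsAddCyclic.card_nsmulAddMonoidHom_ker (G := ZMod q) k

theorem ncard_add_mul_eq_zero_le_div_minFac (a : ZMod q) {α : ZMod q} (hα : α ≠ 0) :
    {j | a + α * j = 0}.ncard ≤ q / q.minFac := by
  have hlt : q.gcd α.val < q :=
    (Nat.gcd_le_right q (ZMod.val_pos.2 hα)).trans_lt α.val_lt
  calc {j | a + α * j = 0}.ncard ≤ {j | α * j = 0}.ncard := ncard_add_mul_eq_zero_le a α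
    _ = q.gcd α.val := by simpa using ncard_natCast_mul_eq_zero (q := q) α.val
    _ ≤ q / q.minFac := le_div_minFac_of_dvd_of_lt (Nat.gcd_dvd_left q α.val) hlt

theorem sub_div_minFac_le_hwt_add_mul (a : ZMod q) {α : ZMod q} (hα : α ≠ 0) :
    q - q / q.minFac ≤ hwt fun j ↦ a + α * j := by
  rw [hwt_eq_card_sub_ncard, Nat.card_zmod]
  exact Nat.sub_le_sub_left (ncard_add_mul_eq_zero_le_div_minFac a hα) q

theorem hwt_natCast_mul_of_dvd {k : ℕ} (hk : k ∣ q) :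
    hwt (fun j : ZMod q ↦ (k : ZMod q) * j) = q - k := by
  rw [hwt_eq_card_sub_ncard, Nat.card_zmod, ncard_natCast_mul_eq_zero, Nat.gcd_eq_right hk]

end ZModWords

section ExtendedWords

variable {q n : ℕ} [NeZero q]

theorem natCast_fin_eq_finEquiv (j : Fin q) : ((j : ℕ) : ZMod q) = ZMod.finEquiv q j := by
  obtain ⟨k, rfl⟩ := Nat.exists_eq_succ_of_ne_zero (NeZero.ne q)
  exact ZMod.natCast_zmod_val (n := k + 1) j

/-- The isolated coordinate of words of length `q * n + 1`, between the first block of length `n`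
and the others. -/
def pivot (q n : ℕ) [NeZero q] : Fin (q * n + 1) :=
  ⟨n, Nat.lt_succ_of_le (Nat.le_mul_of_pos_left n (NeZero.pos q))⟩

/-- The `i`-th coordinate of the `j`-th block of length `n`, where the blocks are numbered from
`0` and the pivot is skipped. -/
def blockCoord (j : Fin q) (i : Fin n) : Fin (q * n + 1) :=
  (pivot q n).succAbove (finProdFinEquiv (j, i))

theorem blockCoord_val_of_eq_zero {j : Fin q} (hj : (j : ℕ) = 0) (i : Fin n) :
    (blockCoord j i : ℕ) = i := by
  rw [blockCoord, Fin.succAbove_of_castSucc_lt] <;>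
    simp [Fin.lt_def, pivot, finProdFinEquiv, hj]

theorem blockCoord_val_of_ne_zero {j : Fin q} (hj : (j : ℕ) ≠ 0) (i : Fin n) :
    (blockCoord j i : ℕ) = i + n * j + 1 := by
  have hle : n ≤ i + n * j := le_add_left (Nat.le_mul_of_pos_right n (Nat.pos_of_ne_zero hj))
  rw [blockCoord, Fin.succAbove_of_le_castSucc] <;>
    simp [Fin.le_def, pivot, finProdFinEquiv, hle]

theorem lt_blockCoord_val {j : Fin q} (hj : (j : ℕ) ≠ 0) (i : Fin n) :
    n < blockCoord j i := by
  rw [blockCoord_val_of_ne_zero hj]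
  have := Nat.le_mul_of_pos_right n (Nat.pos_of_ne_zero hj)
  omega

theorem chat_pivot (c : Fin n → ZMod q) : chat q n c (pivot q n) = 0 := by
  simp [chat, pivot]

theorem vstar_pivot : vstar q n (pivot q n) = 1 := by
  simp [vstar, pivot]

theorem chat_blockCoord (c : Fin n → ZMod q) (j : Fin q) (i : Fin n) :
    chat q n c (blockCoord j i) = c i := by
  by_cases hj : (j : ℕ) = 0
  · simp [chat, blockCoord_val_of_eq_zero hj, i.isLt.ne]
  · have hlt := lt_blockCoord_val hj i
    simp only [chat, hlt.ne', hlt.not_gt, dite_false]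
    congr 1
    ext
    simp [blockCoord_val_of_ne_zero hj, Nat.mod_eq_of_lt i.isLt]

theorem vstar_blockCoord (j : Fin q) (i : Fin n) : vstar q n (blockCoord j i) = (j : ℕ) := by
  by_cases hj : (j : ℕ) = 0
  · simp [vstar, blockCoord_val_of_eq_zero hj, hj]
  · have hlt := lt_blockCoord_val hj i
    simp only [vstar, hlt.ne', hlt.not_gt, if_false]
    rw [blockCoord_val_of_ne_zero hj, Nat.add_sub_cancel, Nat.add_mul_div_left _ _ i.pos,
      Nat.div_eq_of_lt i.isLt, zero_add]

theorem sum_eq_pivot_add_sum_blockCoord {M : Type*} [AddCommMonoid M]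
    (f : Fin (q * n + 1) → M) :
    ∑ k, f k = f (pivot q n) + ∑ i, ∑ j, f (blockCoord j i) := by
  rw [Fin.sum_univ_succAbove f (pivot q n), ← Equiv.sum_comp finProdFinEquiv,
    Fintype.sum_prod_type_right]
  rfl

theorem hwt_chat_add_smul_vstar (c : Fin n → ZMod q) (α : ZMod q) :
    hwt (chat q n c + α • vstar q n) =
      (if α ≠ 0 then 1 else 0) + ∑ i, hwt fun j : ZMod q ↦ c i + α * j := by
  rw [hwt_eq_sum, sum_eq_pivot_add_sum_blockCoord]
  simp only [Pi.add_apply, Pi.smul_apply, smul_eq_mul, chat_pivot, vstar_pivot, chat_blockCoord,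
    vstar_blockCoord, zero_add, mul_one, natCast_fin_eq_finEquiv, hwt_eq_sum]
  congr! 2 with i
  exact Equiv.sum_comp (ZMod.finEquiv q).toEquiv fun j ↦ if c i + α * j ≠ 0 then 1 else 0

theorem hwt_chat (c : Fin n → ZMod q) : hwt (chat q n c) = q * hwt c := by
  have h := hwt_chat_add_smul_vstar c 0
  simp only [zero_smul, add_zero, zero_mul, ne_eq, not_true_eq_false, if_false, zero_add,
    hwt_const, Nat.card_zmod, ← Finset.mul_sum] at h
  rw [h, hwt_eq_sum]

theorem lt_hwt_chat_add_smul_vstar (c : Fin n → ZMod q) {α : ZMod q} (hα : α ≠ 0) :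
    (q - q / q.minFac) * n < hwt (chat q n c + α • vstar q n) := by
  have hcols : ∑ _i : Fin n, (q - q / q.minFac) ≤ ∑ i, hwt fun j : ZMod q ↦ c i + α * j :=
    Finset.sum_le_sum fun i _ ↦ sub_div_minFac_le_hwt_add_mul (c i) hα
  rw [Fin.sum_const, smul_eq_mul, mul_comm] at hcols
  rw [hwt_chat_add_smul_vstar, if_pos hα]
  omega

theorem hwt_natCast_smul_vstar_of_dvd {k : ℕ} (hk : k ∣ q) (hlt : k < q) :
    hwt ((k : ZMod q) • vstar q n) = (q - k) * n + 1 := by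
  have hk0 : (k : ZMod q) ≠ 0 := by
    rw [Ne, ZMod.natCast_eq_zero_iff]
    exact fun hqk ↦ hlt.ne (Nat.dvd_antisymm hk hqk)
  have h := hwt_chat_add_smul_vstar (0 : Fin n → ZMod q) k
  simp only [chat_zero, zero_add, Pi.zero_apply, if_pos hk0, hwt_natCast_mul_of_dvd hk,
    Fin.sum_const, smul_eq_mul] at h
  rw [h, mul_comm, add_comm]

end ExtendedWords

theorem min_weight_D_general {q n : ℕ} (hq : 2 ≤ q) {C : Set (Fin n → ZMod q)} (h0 : 0 ∈ C)
    (hC : ∀ c ∈ C, c ≠ 0 → (q - q / q.minFac) * n < q * hwt c) :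
    IsLeast (nonzeroWeights (extendedCode C)) ((q - q / q.minFac) * n + 1) := by
  have : NeZero q := ⟨by omega⟩
  have hmin : hwt (((q / q.minFac : ℕ) : ZMod q) • vstar q n) = (q - q / q.minFac) * n + 1 :=
    hwt_natCast_smul_vstar_of_dvd (Nat.div_dvd_of_dvd q.minFac_dvd)
      (Nat.div_lt_self (by omega) (Nat.minFac_prime (by omega)).one_lt)
  constructor
  · exact ⟨_, ⟨0, h0, _, by rw [chat_zero, zero_add]⟩,
      hwt_pos.1 (hmin ▸ Nat.succ_pos _), hmin.symm⟩
  · rintro _ ⟨_, ⟨c, hcC, α, rfl⟩, hne, rfl⟩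
    by_cases hα : α = 0
    · subst hα
      rw [zero_smul, add_zero] at hne ⊢
      rw [hwt_chat]
      exact hC c hcC fun hc ↦ hne (by rw [hc, chat_zero])
    · exact lt_hwt_chat_add_smul_vstar c hα

/-- If `q` is even, `C` contains a word all of whose coordinates lie in `{0, q/2}`, and
`n ≤ 2d - 1` where `d` is the minimum nonzero weight of `C`, then the minimum nonzero
weight of `D = { ĉ + α • v* : c ∈ C, α ∈ ZMod q }` equals `(q/2)·n + 1`. -/
theorem min_weight_D (q n : ℕ) (hq : 2 ≤ q) (hqe : Even q)
    (C : Submodule (ZMod q) (Fin n → ZMod q))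
    (hne : ∃ c ∈ C, c ≠ 0)
    (d : ℕ) (hd : d = sInf {w | ∃ c ∈ C, c ≠ 0 ∧ w = hwt c})
    (hc : ∃ c ∈ C, ∀ i, c i = 0 ∨ c i = ((q / 2 : ℕ) : ZMod q))
    (hn : n ≤ 2 * d - 1) :
    sInf {w | ∃ x ∈ {w | ∃ c ∈ C, ∃ α : ZMod q, w = chat q n c + α • vstar q n},
        x ≠ (0 : Fin (q * n + 1) → ZMod q) ∧ w = hwt x} = (q / 2) * n + 1 := by
  have hlt : ∀ c ∈ C, c ≠ 0 → n < 2 * hwt c := by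
    intro c hcC hc0
    have hpos : 0 < hwt c := hwt_pos.2 hc0
    have hdle : d ≤ hwt c := hd ▸ Nat.sInf_le ⟨c, hcC, hc0, rfl⟩
    omega
  have hhalf := sub_div_minFac_of_even hqe
  rw [← hhalf]
  exact (min_weight_D_general hq C.zero_mem fun c hcC hc0 ↦
    hhalf ▸ half_mul_lt_mul_of_even (by omega) hqe (hlt c hcC hc0)).csInf_eq
end

section
/- Let q ≥ 2 be an even integer and let k ≥ 2. Then the Z_q-Simplex code S_k(q) has exactly q^k codewords, its length (the cardinality of V_k) is (q^k - 1)/(q - 1), and its minimum nonzero Hamming weight equals (q/2)·n_{k-1} + 1, where n_{k-1} = (q^{k-1} - 1)/(q - 1). -/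
/-- `Vset q k` consists of the nonzero words `v : Fin k → ZMod q` whose last nonzero
coordinate equals `1` (one representative from each free rank-one submodule). -/
def Vset (q k : ℕ) : Set (Fin k → ZMod q) :=
  {v | v ≠ 0 ∧ ∃ m : Fin k, v m ≠ 0 ∧ (∀ i, m < i → v i = 0) ∧ v m = 1}

/-- The `ZMod q`-Simplex code of dimension `k`: the words obtained by evaluating a linear
form `u` at all columns `v ∈ Vset q k`. -/
def SimplexCode (q k : ℕ) : Set (↥(Vset q k) → ZMod q) :=
  {c | ∃ u : Fin k → ZMod q, c = fun v : ↥(Vset q k) => ∑ i, u i * v.1 i}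

/-!
The columns of `Vset q (k + 1)` are the columns of `Vset q k` extended by `0` together with all
words extended by `1`. Hence extending a linear form `u` by a coefficient `a` increases its weight
by the number of words `v` with `u ⬝ᵥ v + a ≠ 0`. If `u ≠ 0`, the image of `v ↦ u ⬝ᵥ v` is a
nontrivial subgroup of `ZMod q`, so its order is at least the least prime factor `p` of `q` and at
most `q ^ k / p` words are lost. A form with a single nonzero coefficient, of additive order `p` and
in the first place, loses exactly that many at each step.
-/

open scoped Matrix

section FiberCounts

variable {G H : Type*} [AddGroup G] [AddGroup H]

lemma card_ker_eq_card_div_card_range [Finite G] (f : G →+ H) :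
    Nat.card f.ker = Nat.card G / Nat.card f.range := by
  have : Finite f.range := Set.finite_range f
  rw [← AddSubgroup.card_mul_index f.ker, AddSubgroup.index_ker,
    Nat.mul_div_cancel _ Nat.card_pos]

lemma ncard_fiber_le_card_ker [Finite G] (f : G →+ H) (b : H) :
    {x | f x = b}.ncard ≤ Nat.card f.ker := by
  obtain hb | ⟨y, hy⟩ := {x | f x = b}.eq_empty_or_nonempty
  · simp [hb]
  · refine Set.ncard_le_ncard_of_injOn (t := (f.ker : Set G)) (· - y) (fun x hx ↦ ?_)
      sub_left_injective.injOn
    simp_all [AddMonoidHom.mem_ker]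

lemma ncard_apply_ne_zero [Finite G] (f : G →+ H) :
    {x | f x ≠ 0}.ncard = Nat.card G - Nat.card G / Nat.card f.range := by
  rw [← card_ker_eq_card_div_card_range]
  exact Set.ncard_compl (f.ker : Set G)

lemma minFac_card_le_card_range [Finite H] {f : G →+ H} (hf : f ≠ 0) :
    (Nat.card H).minFac ≤ Nat.card f.range :=
  Nat.minFac_le_of_dvd
    (f.range.one_lt_card_iff_ne_bot.mpr (mt AddMonoidHom.range_eq_bot_iff.mp hf))
    f.range.card_addSubgroup_dvd_card

lemma card_sub_card_div_minFac_le_ncard_apply_ne [Finite G] [Finite H] {f : G →+ H} (hf : f ≠ 0)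
    (b : H) : Nat.card G - Nat.card G / (Nat.card H).minFac ≤ {x | f x ≠ b}.ncard := by
  refine (Nat.sub_le_sub_left ?_ _).trans_eq (Set.ncard_compl {x | f x = b}).symm
  calc {x | f x = b}.ncard
      ≤ Nat.card f.ker := ncard_fiber_le_card_ker f b
    _ = Nat.card G / Nat.card f.range := card_ker_eq_card_div_card_range f
    _ ≤ Nat.card G / (Nat.card H).minFac :=
      Nat.div_le_div_left (minFac_card_le_card_range hf) (Nat.minFac_pos _)

end FiberCounts

section LinearForms

variable {q k : ℕ}

lemma snoc_dotProduct_snoc {R : Type*} [NonUnitalNonAssocSemiring R] (u v : Fin k → R) (a b : R) :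
    (Fin.snoc u a : Fin (k + 1) → R) ⬝ᵥ Fin.snoc v b = u ⬝ᵥ v + a * b := by
  simp [dotProduct, Fin.sum_univ_castSucc]

lemma pow_succ_sub_pow_succ_div {d : ℕ} (hd : d ∣ q) (k : ℕ) :
    q ^ (k + 1) - q ^ (k + 1) / d = (q - q / d) * q ^ k := by
  rw [pow_succ', Nat.mul_div_right_comm hd, Nat.sub_mul]

lemma mul_geomSum_add_one_le_pow {c : ℕ} (hc : c < q) (k : ℕ) :
    c * ∑ i ∈ Finset.range k, q ^ i + 1 ≤ q ^ k := by
  obtain ⟨n, rfl⟩ := Nat.exists_eq_add_one_of_ne_zero (Nat.ne_zero_of_lt hc)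
  calc c * ∑ i ∈ Finset.range k, (n + 1) ^ i + 1
      ≤ n * ∑ i ∈ Finset.range k, (n + 1) ^ i + 1 := by gcongr; exact Nat.le_of_lt_succ hc
    _ = (n + 1) ^ k := by rw [mul_comm, geom_sum_mul_add]

lemma card_fin_fun_zmod (q k : ℕ) : Nat.card (Fin k → ZMod q) = q ^ k := by
  simp [Nat.card_fun]

lemma le_ncard_dotProduct_add_ne_zero [NeZero q] {u : Fin (k + 1) → ZMod q} (hu : u ≠ 0)
    (a : ZMod q) :
    (q - q / q.minFac) * q ^ k ≤ {v | u ⬝ᵥ v + a ≠ 0}.ncard := by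
  have hform : (dotProductEquiv (ZMod q) (Fin (k + 1)) u).toAddMonoidHom ≠ 0 := fun h ↦
    hu <| (dotProductEquiv (ZMod q) (Fin (k + 1))).map_eq_zero_iff.mp <|
      LinearMap.toAddMonoidHom_injective h
  have hle := card_sub_card_div_minFac_le_ncard_apply_ne hform (-a)
  rw [card_fin_fun_zmod, Nat.card_zmod, pow_succ_sub_pow_succ_div q.minFac_dvd] at hle
  simpa [← eq_neg_iff_add_eq_zero] using hle

lemma ncard_mul_apply_ne_zero [NeZero q] (c : ZMod q) (j : Fin (k + 1)) :
    {v : Fin (k + 1) → ZMod q | c * v j ≠ 0}.ncard = (q - q / addOrderOf c) * q ^ k := by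
  let f : (Fin (k + 1) → ZMod q) →+ ZMod q :=
    (AddMonoidHom.mulLeft c).comp (Pi.evalAddMonoidHom _ j)
  have hrange : f.range = AddSubgroup.zmultiples c := by
    ext x
    constructor
    · rintro ⟨v, rfl⟩
      exact ⟨(v j).val, by simp [f, mul_comm]⟩
    · rintro ⟨n, rfl⟩
      exact ⟨fun _ ↦ n, by simp [f, mul_comm]⟩
  have horder : addOrderOf c ∣ q := by simpa using addOrderOf_dvd_natCard c
  rw [← pow_succ_sub_pow_succ_div horder, ← card_fin_fun_zmod, ← Nat.card_zmultiples, ← hrange]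
  exact ncard_apply_ne_zero f

end LinearForms

section Columns

variable {q k : ℕ} [Fact (1 < q)]

lemma mem_vset_iff {v : Fin k → ZMod q} :
    v ∈ Vset q k ↔ ∃ m, v m = 1 ∧ ∀ i, m < i → v i = 0 := by
  constructor
  · rintro ⟨-, m, -, hzero, hone⟩
    exact ⟨m, hone, hzero⟩
  · rintro ⟨m, hone, hzero⟩
    have hm : v m ≠ 0 := by simp [hone]
    exact ⟨Function.ne_iff.mpr ⟨m, hm⟩, m, hm, hzero, hone⟩

lemma single_one_mem_vset (j : Fin k) : (Pi.single j 1 : Fin k → ZMod q) ∈ Vset q k :=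
  mem_vset_iff.mpr ⟨j, Pi.single_eq_same j 1, fun _ hi ↦ Pi.single_eq_of_ne hi.ne' 1⟩

lemma snoc_mem_vset_iff {v : Fin k → ZMod q} {a : ZMod q} :
    (Fin.snoc v a : Fin (k + 1) → ZMod q) ∈ Vset q (k + 1) ↔ v ∈ Vset q k ∧ a = 0 ∨ a = 1 := by
  simp [mem_vset_iff, Fin.exists_fin_succ', Fin.forall_fin_succ', ← and_assoc, Fin.castSucc_lt_last,
    (Fin.castSucc_lt_last _).not_gt]

lemma vset_succ :
    Vset q (k + 1) = (Fin.snoc · 0) '' Vset q k ∪ Set.range (Fin.snoc · 1) := by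
  ext v
  cases v using Fin.snocCases with | snoc v a => ?_
  simp [snoc_mem_vset_iff, Fin.snoc_inj, eq_comm]

lemma ncard_sep_vset_succ (P : (Fin (k + 1) → ZMod q) → Prop) :
    {v ∈ Vset q (k + 1) | P v}.ncard =
      {v ∈ Vset q k | P (Fin.snoc v 0)}.ncard +
        {v : Fin k → ZMod q | P (Fin.snoc v 1)}.ncard := by
  have hsplit : {v ∈ Vset q (k + 1) | P v} =
      (Fin.snoc · 0) '' {v : Fin k → ZMod q | v ∈ Vset q k ∧ P (Fin.snoc v 0)} ∪
        (Fin.snoc · 1) '' {v : Fin k → ZMod q | P (Fin.snoc v 1)} := by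
    rw [vset_succ]
    aesop
  rw [hsplit, Set.ncard_union_eq]
  · congr 1 <;>
      exact Set.ncard_image_of_injective _ (Fin.snoc_left_injective (α := fun _ ↦ ZMod q) _)
  · rw [Set.disjoint_left]
    rintro _ ⟨v, -, rfl⟩ ⟨w, -, h⟩
    exact one_ne_zero (Fin.snoc_inj.mp h).2

lemma ncard_vset (k : ℕ) : (Vset q k).ncard = ∑ i ∈ Finset.range k, q ^ i := by
  induction k with
  | zero =>
    have hempty : Vset q 0 = ∅ := by ext v; simp [mem_vset_iff]
    simp [hempty]
  | succ k ih =>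
    have h := ncard_sep_vset_succ (q := q) (k := k) fun _ ↦ True
    simpa [ih, Set.ncard_univ, Finset.sum_range_succ] using h

end Columns

section Code

/-- The encoding map of the Simplex code, sending the coefficient vector of a linear form to the
word of its values on the columns; its range is `SimplexCode q k`. -/
def simplexEncoder (q k : ℕ) : (Fin k → ZMod q) →ₗ[ZMod q] (Vset q k → ZMod q) where
  toFun u v := u ⬝ᵥ v.1
  map_add' _ _ := funext fun _ ↦ add_dotProduct _ _ _
  map_smul' _ _ := funext fun _ ↦ smul_dotProduct _ _ _

lemma simplexCode_eq_range (q k : ℕ) : SimplexCode q k = Set.range (simplexEncoder q k) :=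
  Set.ext fun _ ↦ exists_congr fun _ ↦ eq_comm

lemma hwt_simplexEncoder {q k : ℕ} (u : Fin k → ZMod q) :
    hwt (simplexEncoder q k u) = {v ∈ Vset q k | u ⬝ᵥ v ≠ 0}.ncard := by
  rw [hwt, ← Set.ncard_image_of_injective _ Subtype.val_injective]
  congr 1
  ext v
  simp [simplexEncoder, and_comm]

variable {q k : ℕ} [Fact (1 < q)]

lemma simplexEncoder_injective : Function.Injective (simplexEncoder q k) := by
  intro u w h
  ext j
  simpa [simplexEncoder] using congrFun h ⟨_, single_one_mem_vset j⟩

variable (q k) in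
lemma ncard_simplexCode : (SimplexCode q k).ncard = q ^ k := by
  rw [simplexCode_eq_range, ← Set.image_univ,
    Set.ncard_image_of_injective _ simplexEncoder_injective, Set.ncard_univ, card_fin_fun_zmod]

lemma hwt_simplexEncoder_snoc (u : Fin k → ZMod q) (a : ZMod q) :
    hwt (simplexEncoder q (k + 1) (Fin.snoc u a)) =
      hwt (simplexEncoder q k u) + {v | u ⬝ᵥ v + a ≠ 0}.ncard := by
  simp [hwt_simplexEncoder, ncard_sep_vset_succ, snoc_dotProduct_snoc]

lemma hwt_simplexEncoder_snoc_zero {a : ZMod q} (ha : a ≠ 0) :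
    hwt (simplexEncoder q (k + 1) (Fin.snoc 0 a)) = q ^ k := by
  rw [hwt_simplexEncoder_snoc]
  simp [hwt, ha, Set.ncard_univ]

lemma hwt_simplexEncoder_single_zero {c : ZMod q} (hc : c ≠ 0) (k : ℕ) :
    hwt (simplexEncoder q (k + 1) (Pi.single 0 c)) =
      (q - q / addOrderOf c) * ∑ i ∈ Finset.range k, q ^ i + 1 := by
  induction k with
  | zero =>
    have hsnoc : (Pi.single 0 c : Fin 1 → ZMod q) = Fin.snoc 0 c := by
      ext i; simp [Subsingleton.elim i 0, Fin.snoc]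
    rw [hsnoc, hwt_simplexEncoder_snoc_zero hc]
    simp
  | succ k ih =>
    have hsnoc : (Pi.single 0 c : Fin (k + 2) → ZMod q) = Fin.snoc (Pi.single 0 c) 0 := by
      ext i
      cases i using Fin.lastCases <;> simp [Pi.single_apply]
    rw [hsnoc, hwt_simplexEncoder_snoc, ih, Finset.sum_range_succ, mul_add, add_right_comm,
      ← ncard_mul_apply_ne_zero c 0]
    simp

lemma le_hwt_simplexEncoder {u : Fin k → ZMod q} (hu : u ≠ 0) :
    (q - q / q.minFac) * ∑ i ∈ Finset.range (k - 1), q ^ i + 1 ≤ hwt (simplexEncoder q k u) := by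
  induction u using Fin.snocInduction with
  | elim0 => exact absurd (Subsingleton.elim _ _) hu
  | @snoc k w a ih =>
    by_cases hw : w = 0
    · subst hw
      have ha : a ≠ 0 := by
        rintro rfl
        exact hu (funext <| Fin.lastCases (by simp) (by simp))
      rw [hwt_simplexEncoder_snoc_zero ha]
      have hq : 0 < q := Nat.pos_of_neZero q
      exact mul_geomSum_add_one_le_pow
        (Nat.sub_lt hq (Nat.div_pos (Nat.minFac_le hq) q.minFac_pos)) k
    · obtain _ | k := k
      · exact absurd (Subsingleton.elim _ _) hw
      rw [hwt_simplexEncoder_snoc, Nat.add_sub_cancel, Finset.sum_range_succ, mul_add,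
        add_right_comm]
      exact Nat.add_le_add (ih hw) (le_ncard_dotProduct_add_ne_zero hw a)

variable (q k) in
lemma isLeast_hwt_simplexCode :
    IsLeast {w | ∃ c ∈ SimplexCode q (k + 1), c ≠ 0 ∧ w = hwt c}
      ((q - q / q.minFac) * ∑ i ∈ Finset.range k, q ^ i + 1) := by
  have hq : 1 < q := Fact.out
  have hprime : Fact q.minFac.Prime := ⟨Nat.minFac_prime hq.ne'⟩
  obtain ⟨c, hc⟩ : ∃ c : ZMod q, addOrderOf c = q.minFac :=
    exists_prime_addOrderOf_dvd_card' q.minFac (by simpa using q.minFac_dvd)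
  have hc0 : c ≠ 0 := by
    rintro rfl
    exact hprime.out.ne_one (hc ▸ addOrderOf_zero)
  rw [simplexCode_eq_range]
  constructor
  · refine ⟨_, ⟨Pi.single 0 c, rfl⟩, ?_, ?_⟩
    · simpa [map_eq_zero_iff _ simplexEncoder_injective] using hc0
    · rw [hwt_simplexEncoder_single_zero hc0, hc]
  · rintro _ ⟨_, ⟨u, rfl⟩, hne, rfl⟩
    exact le_hwt_simplexEncoder (u := u) fun hu ↦ hne (by rw [hu, map_zero])

end Code

theorem simplex_params_general (q k : ℕ) (hq : 2 ≤ q) (hk : 1 ≤ k) :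
    (SimplexCode q k).ncard = q ^ k ∧
      (Vset q k).ncard = (q ^ k - 1) / (q - 1) ∧
      IsLeast {w | ∃ c ∈ SimplexCode q k, c ≠ 0 ∧ w = hwt c}
        ((q - q / q.minFac) * ((q ^ (k - 1) - 1) / (q - 1)) + 1) := by
  have : Fact (1 < q) := ⟨hq⟩
  obtain ⟨k, rfl⟩ := Nat.exists_eq_add_of_le' hk
  rw [← Nat.geomSum_eq hq, ← Nat.geomSum_eq hq]
  exact ⟨ncard_simplexCode q (k + 1), ncard_vset (k + 1), isLeast_hwt_simplexCode q k⟩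

/-- For even `q` and `k ≥ 2`, the `ZMod q`-Simplex code `S_k(q)` has `q^k` codewords,
length `n_k = (q^k - 1)/(q - 1)`, and minimum nonzero Hamming weight
`(q/2)·n_{k-1} + 1` where `n_{k-1} = (q^{k-1} - 1)/(q - 1)`. -/
theorem simplex_params (q k : ℕ) (hq : 2 ≤ q) (hqe : Even q) (hk : 2 ≤ k) :
    (SimplexCode q k).ncard = q ^ k ∧
      (Vset q k).ncard = (q ^ k - 1) / (q - 1) ∧
      sInf {w | ∃ c ∈ SimplexCode q k, c ≠ 0 ∧ w = hwt c} =
        (q / 2) * ((q ^ (k - 1) - 1) / (q - 1)) + 1 := by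
  obtain ⟨hcard, hlength, hleast⟩ := simplex_params_general q k hq (by omega)
  rw [(Nat.minFac_eq_two_iff q).mpr hqe.two_dvd, show q - q / 2 = q / 2 by grind] at hleast
  exact ⟨hcard, hlength, hleast.csInf_eq⟩
end

section
/- Let q ≥ 2, n ≥ 1, and let v ∈ ZMod q be nonzero and not a unit (a zero divisor). Let C_v = { a • w : a ∈ ZMod q } ⊆ (Fin n → ZMod q), where w is the constant word with all coordinates equal to v. Then the covering radius of C_v equals n. -/
/-- The Hamming distance between two words: the number of coordinates where they differ. -/
noncomputable def hdist {q : ℕ} {I : Type*} (x y : I → ZMod q) : ℕ :=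
  Set.ncard {i | x i ≠ y i}

/-- The covering radius of a code `C`: the maximum over all words `u` of the minimum Hamming
distance from `u` to a codeword of `C`. -/
noncomputable def covRad {q : ℕ} {I : Type*} (C : Set (I → ZMod q)) : ℕ :=
  sSup {r | ∃ u : I → ZMod q, r = sInf {e | ∃ c ∈ C, e = hdist u c}}

section

variable {q : ℕ} {I : Type*} {C : Set (I → ZMod q)} {u : I → ZMod q}

theorem hdist_le_card [Finite I] (x y : I → ZMod q) : hdist x y ≤ Nat.card I :=
  Set.ncard_le_card _

theorem hdist_eq_card_of_forall_ne {x y : I → ZMod q} (h : ∀ i, x i ≠ y i) :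
    hdist x y = Nat.card I := by
  rw [hdist, Set.eq_univ_of_forall (s := {i | x i ≠ y i}) h, Set.ncard_univ]

/-- The distance from a word `u` to a code `C`, that is, the quantity maximized in the covering
radius. It has the junk value `0` when `C` is empty. -/
noncomputable def hdistToCode (u : I → ZMod q) (C : Set (I → ZMod q)) : ℕ :=
  sInf {e | ∃ c ∈ C, e = hdist u c}

theorem hdistToCode_le_hdist {c : I → ZMod q} (hc : c ∈ C) : hdistToCode u C ≤ hdist u c :=
  Nat.sInf_le ⟨c, hc, rfl⟩

theorem exists_mem_hdistToCode_eq_hdist (hC : C.Nonempty) (u : I → ZMod q) :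
    ∃ c ∈ C, hdistToCode u C = hdist u c := by
  obtain ⟨c, hc⟩ := hC
  exact Nat.sInf_mem (s := {e | ∃ c ∈ C, e = hdist u c}) ⟨hdist u c, c, hc, rfl⟩

theorem covRad_eq_of_isGreatest {r : ℕ}
    (h : IsGreatest (Set.range fun u ↦ hdistToCode u C) r) : covRad C = r := by
  simpa only [covRad, hdistToCode, Set.range, eq_comm] using h.csSup_eq

theorem covRad_eq_card_of_forall_ne [Finite I] (hC : C.Nonempty)
    (hu : ∀ c ∈ C, ∀ i, u i ≠ c i) : covRad C = Nat.card I := by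
  refine covRad_eq_of_isGreatest ⟨⟨u, ?_⟩, ?_⟩
  · obtain ⟨c, hc, hdist_eq⟩ := exists_mem_hdistToCode_eq_hdist hC u
    exact hdist_eq.trans (hdist_eq_card_of_forall_ne (hu c hc))
  · rintro _ ⟨x, rfl⟩
    obtain ⟨c, hc⟩ := hC
    exact (hdistToCode_le_hdist hc).trans (hdist_le_card x c)

theorem covRad_eq_card_of_forall_not_isUnit [Finite I] (hC : C.Nonempty)
    (hunit : ∀ c ∈ C, ∀ i, ¬ IsUnit (c i)) : covRad C = Nat.card I :=
  covRad_eq_card_of_forall_ne (u := 1) hC fun c hc i h ↦ hunit c hc i (h ▸ isUnit_one)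

theorem covRad_zero_divisor_repetition_general [Finite I] (w : I → ZMod q)
    (hw : ∀ i, ¬ IsUnit (w i)) :
    covRad {c : I → ZMod q | ∃ a : ZMod q, c = a • w} = Nat.card I := by
  refine covRad_eq_card_of_forall_not_isUnit ⟨w, 1, (one_smul _ w).symm⟩ ?_
  rintro _ ⟨a, rfl⟩ i hunit
  exact hw i (isUnit_of_mul_isUnit_right hunit)

end

/-- The covering radius of the zero-divisor repetition code `C_v = { a • (v,…,v) }`,
where `v` is a nonzero non-unit of `ZMod q`, equals `n`. -/
theorem covRad_zero_divisor_repetition (q n : ℕ) (hq : 2 ≤ q) (hn : 1 ≤ n)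
    (v : ZMod q) (hv0 : v ≠ 0) (hvu : ¬ IsUnit v) :
    covRad {w : Fin n → ZMod q | ∃ a : ZMod q, w = a • fun _ => v} = n :=
  (covRad_zero_divisor_repetition_general _ fun _ ↦ hvu).trans (Nat.card_fin n)
end

section
/- Let q ≥ 2 and n ≥ 1, and let C ⊆ (Fin n → ZMod q) be the code consisting of all constant words (equivalently, the code generated by the all-ones word, or by u·(1,…,1) for any unit u). Then the covering radius of C equals ⌊n·(q-1)/q⌋. -/
/-!
Summed over the `q` constant words, the distances from a word `u` of length `n` total `n(q-1)`,
because each coordinate of `u` disagrees with exactly `q-1` of them. So some constant word lies at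
distance at most the average `n(q-1)/q`. If the letters of `u` are distributed as evenly as
possible, the `q` distances differ pairwise by at most one, hence none is below the floor of the
average.
-/

theorem covRad_eq_of_forall_exists_le_of_exists_forall_le {q r : ℕ} {I : Type*}
    {C : Set (I → ZMod q)} (covered : ∀ u, ∃ c ∈ C, hdist u c ≤ r)
    (deep : ∃ u, ∀ c ∈ C, r ≤ hdist u c) : covRad C = r := by
  have sInf_le (u : I → ZMod q) : sInf {e | ∃ c ∈ C, e = hdist u c} ≤ r := by
    obtain ⟨c, hc, hle⟩ := covered u
    exact le_trans (Nat.sInf_le ⟨c, hc, rfl⟩) hle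
  refine IsGreatest.csSup_eq ⟨?_, ?_⟩
  · obtain ⟨u, hu⟩ := deep
    obtain ⟨c, hc, -⟩ := covered u
    refine ⟨u, le_antisymm (le_csInf ⟨_, c, hc, rfl⟩ ?_) (sInf_le u)⟩
    rintro _ ⟨c', hc', rfl⟩
    exact hu c' hc'
  · rintro _ ⟨u, rfl⟩
    exact sInf_le u

section FiniteLength

variable {q : ℕ} {I : Type*} [Fintype I]

theorem hdist_eq_card_filter (x y : I → ZMod q) :
    hdist x y = Finset.card {i | x i ≠ y i} := by
  rw [hdist, ← Set.ncard_coe_finset, Finset.coe_filter_univ]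

theorem hdist_const_add_card_fiber (u : I → ZMod q) (a : ZMod q) :
    hdist u (fun _ => a) + Finset.card {i | u i = a} = Fintype.card I := by
  rw [hdist_eq_card_filter, add_comm]
  exact Finset.card_filter_add_card_filter_not (s := Finset.univ) (u · = a)

variable [NeZero q]

theorem sum_hdist_const (u : I → ZMod q) :
    ∑ a : ZMod q, hdist u (fun _ => a) = Fintype.card I * (q - 1) := by
  have card_ne (b : ZMod q) : Finset.card {a | b ≠ a} = q - 1 := by
    rw [Finset.filter_ne, Finset.card_erase_of_mem (Finset.mem_univ b), Finset.card_univ,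
      ZMod.card]
  calc ∑ a : ZMod q, hdist u (fun _ => a)
      = ∑ a : ZMod q, Finset.card {i | u i ≠ a} := by simp only [hdist_eq_card_filter]
    _ = ∑ i, Finset.card {a | u i ≠ a} :=
        (Finset.sum_card_bipartiteAbove_eq_sum_card_bipartiteBelow (fun i a => u i ≠ a)).symm
    _ = Fintype.card I * (q - 1) := by
        simp only [card_ne, Finset.sum_const, Finset.card_univ, smul_eq_mul]

theorem exists_hdist_const_le (u : I → ZMod q) :
    ∃ a : ZMod q, hdist u (fun _ => a) ≤ Fintype.card I * (q - 1) / q := by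
  obtain ⟨a, -, ha⟩ : ∃ a ∈ Finset.univ,
      hdist u (fun _ => a) * q ≤ Fintype.card I * (q - 1) := by
    refine Finset.exists_le_of_sum_le Finset.univ_nonempty (le_of_eq ?_)
    rw [← Finset.sum_mul, sum_hdist_const, Finset.sum_const, Finset.card_univ, ZMod.card,
      smul_eq_mul, mul_comm]
  exact ⟨a, (Nat.le_div_iff_mul_le (NeZero.pos q)).2 ha⟩

theorem le_hdist_const_of_equitableOn_card_fiber {u : I → ZMod q}
    (hu : Set.univ.EquitableOn fun a : ZMod q => Finset.card {i | u i = a}) (a : ZMod q) :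
    Fintype.card I * (q - 1) / q ≤ hdist u (fun _ => a) := by
  have equitable : Set.EquitableOn (Finset.univ : Finset (ZMod q))
      fun b => hdist u (fun _ => b) := by
    intro b c _ _
    have hb := hdist_const_add_card_fiber u b
    have hc := hdist_const_add_card_fiber u c
    have hcb := hu (Set.mem_univ c) (Set.mem_univ b)
    lia
  simpa only [sum_hdist_const, Finset.card_univ, ZMod.card] using
    Finset.EquitableOn.le equitable (Finset.mem_univ a)

theorem card_filter_equivFin_natCast_eq (a : ZMod q) :
    Finset.card {i : I | ((Fintype.equivFin I i : ℕ) : ZMod q) = a} =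
      Nat.count (· ≡ a.val [MOD q]) (Fintype.card I) := by
  have natCast_eq_iff (k : ℕ) : (k : ZMod q) = a ↔ k ≡ a.val [MOD q] := by
    rw [← ZMod.natCast_eq_natCast_iff, ZMod.natCast_zmod_val]
  rw [Nat.count_eq_card_filter_range]
  refine Finset.card_bij (fun i _ => Fintype.equivFin I i) ?_ ?_ ?_
  · simp [natCast_eq_iff]
  · simp [Fin.val_inj]
  · intro k hk
    rw [Finset.mem_filter, Finset.mem_range] at hk
    exact ⟨(Fintype.equivFin I).symm ⟨k, hk.1⟩, by simp [natCast_eq_iff, hk.2], by simp⟩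

variable (q I) in
theorem exists_equitableOn_card_fiber :
    ∃ u : I → ZMod q, Set.univ.EquitableOn fun a : ZMod q => Finset.card {i | u i = a} := by
  refine ⟨fun i => ((Fintype.equivFin I i : ℕ) : ZMod q),
    Set.equitableOn_iff_exists_le_le_add_one.2 ⟨Fintype.card I / q, fun a _ => ?_⟩⟩
  rw [card_filter_equivFin_natCast_eq, Nat.count_modEq_card _ (NeZero.pos q)]
  split_ifs <;> simp

variable (q I) in
theorem covRad_repetition_general :
    covRad {w : I → ZMod q | ∃ a : ZMod q, w = fun _ => a} = Fintype.card I * (q - 1) / q := by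
  refine covRad_eq_of_forall_exists_le_of_exists_forall_le (fun u => ?_) ?_
  · obtain ⟨a, ha⟩ := exists_hdist_const_le u
    exact ⟨_, ⟨a, rfl⟩, ha⟩
  · obtain ⟨u, hu⟩ := exists_equitableOn_card_fiber q I
    refine ⟨u, ?_⟩
    rintro _ ⟨a, rfl⟩
    exact le_hdist_const_of_equitableOn_card_fiber hu a

end FiniteLength

/-- The covering radius of the repetition code of all constant words of length `n` over
`ZMod q` equals `⌊n(q-1)/q⌋`. -/
theorem covRad_repetition (q n : ℕ) (hq : 2 ≤ q) (hn : 1 ≤ n) :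
    covRad {w : Fin n → ZMod q | ∃ a : ZMod q, w = fun _ => a} = n * (q - 1) / q := by
  have : NeZero q := ⟨by lia⟩
  simpa only [Fintype.card_fin] using covRad_repetition_general q (Fin n)
end

section
/- Let q ≥ 2 be an even integer and n ≥ 1. Let w ∈ (Fin ((q-1)*n) → ZMod q) be the concatenation of the blocks (j, j, …, j) of length n for j = 1, 2, …, q-1, and let C = { a • w : a ∈ ZMod q }. Then the covering radius of C equals ⌊(q-1)·φ(q)·n/q⌋ + (q-1-φ(q))·n, where φ is Euler's totient function. -/
/-- `wrep q n` is the concatenation of the blocks `(j, j, …, j)` of length `n` for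
`j = 1, 2, …, q-1`, a word of length `(q-1)·n` over `ZMod q`. -/
def wrep (q n : ℕ) : Fin ((q - 1) * n) → ZMod q := fun i =>
  (((i : ℕ) / n + 1 : ℕ) : ZMod q)

/-!
A word `u` and a multiple `a • w` agree at a unit coordinate `w i` exactly when `a = u i * (w i)⁻¹`,
so `u` colours the unit coordinates of `w` by scalars, and every colouring arises this way. By
pigeonhole some colour is used at least `⌈U / q⌉` times, where `U` is the number of unit
coordinates, and a balanced colouring attains this bound. Setting `u i = 1` at the remaining
coordinates avoids every multiple of `w` there. So the covering radius is the length minus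
`⌈U / q⌉`, and `wrep q n` has `U = φ q * n`.
-/

section CoveringRadius

variable {q : ℕ} {I : Type*} {C : Set (I → ZMod q)} {r : ℕ}

theorem covRad_eq_of_forall_exists_of_exists_forall (hle : ∀ u, ∃ c ∈ C, hdist u c ≤ r)
    (hge : ∃ u, ∀ c ∈ C, r ≤ hdist u c) : covRad C = r := by
  have sInf_hdist_le (u : I → ZMod q) : sInf {e | ∃ c ∈ C, e = hdist u c} ≤ r := by
    obtain ⟨c, hc, hcr⟩ := hle u
    have hmem : hdist u c ∈ {e | ∃ c ∈ C, e = hdist u c} := ⟨c, hc, rfl⟩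
    exact (Nat.sInf_le hmem).trans hcr
  obtain ⟨u, hu⟩ := hge
  obtain ⟨c, hc, -⟩ := hle u
  refine IsGreatest.csSup_eq ⟨⟨u, le_antisymm ?_ (sInf_hdist_le u)⟩, ?_⟩
  · refine le_csInf ⟨_, c, hc, rfl⟩ ?_
    rintro _ ⟨c, hc, rfl⟩
    exact hu c hc
  · rintro _ ⟨u, rfl⟩
    exact sInf_hdist_le u

theorem ncard_setOf_eq_add_hdist [Finite I] (u c : I → ZMod q) :
    {i | u i = c i}.ncard + hdist u c = Nat.card I :=
  Set.ncard_add_ncard_compl {i | u i = c i}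

theorem covRad_eq_card_sub [Finite I]
    (hge : ∀ u : I → ZMod q, ∃ c ∈ C, r ≤ {i | u i = c i}.ncard)
    (hle : ∃ u : I → ZMod q, ∀ c ∈ C, {i | u i = c i}.ncard ≤ r) :
    covRad C = Nat.card I - r := by
  refine covRad_eq_of_forall_exists_of_exists_forall (fun u ↦ ?_) ?_
  · obtain ⟨c, hc, hr⟩ := hge u
    have := ncard_setOf_eq_add_hdist u c
    exact ⟨c, hc, by lia⟩
  · obtain ⟨u, hu⟩ := hle
    refine ⟨u, fun c hc ↦ ?_⟩
    have := ncard_setOf_eq_add_hdist u c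
    have := hu c hc
    lia

end CoveringRadius

section Colorings

variable {α κ : Type*} [Finite α] [Finite κ] [Nonempty κ]

theorem exists_ceilDiv_le_ncard_fiber (f : α → κ) :
    ∃ k, Nat.card α ⌈/⌉ Nat.card κ ≤ (f ⁻¹' {k}).ncard := by
  classical
  have := Fintype.ofFinite α
  have := Fintype.ofFinite κ
  have sum_fibers : ∑ k, (f ⁻¹' {k}).ncard = Nat.card α := by
    simp only [Set.ncard_eq_toFinset_card', Nat.card_eq_fintype_card]
    rw [← Finset.card_univ, Finset.card_eq_sum_card_fiberwise (fun a _ ↦ Finset.mem_univ (f a))]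
    congr! with k
    ext a
    simp
  obtain ⟨k, -, hk⟩ : ∃ k ∈ Finset.univ, Nat.card α ≤ Nat.card κ * (f ⁻¹' {k}).ncard := by
    refine Finset.exists_le_of_sum_le Finset.univ_nonempty ?_
    rw [← Finset.mul_sum, sum_fibers, Finset.sum_const, Finset.card_univ,
      Nat.card_eq_fintype_card (α := κ), smul_eq_mul]
  exact ⟨k, (ceilDiv_le_iff_le_mul Nat.card_pos).2 hk⟩

theorem exists_forall_ncard_fiber_le_ceilDiv :
    ∃ f : α → κ, ∀ k, (f ⁻¹' {k}).ncard ≤ Nat.card α ⌈/⌉ Nat.card κ := by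
  have := Fintype.ofFinite α
  have := Fintype.ofFinite κ
  set m := Nat.card α ⌈/⌉ Nat.card κ
  have card_le : Nat.card α ≤ Nat.card (κ × Fin m) := by
    rw [Nat.card_prod, Nat.card_fin]
    exact (ceilDiv_le_iff_le_mul Nat.card_pos).1 le_rfl
  obtain ⟨e⟩ : Nonempty (α ↪ κ × Fin m) :=
    Function.Embedding.nonempty_of_card_le (by simpa only [Nat.card_eq_fintype_card] using card_le)
  refine ⟨fun a ↦ (e a).1, fun k ↦ ?_⟩
  have injOn_snd : Set.InjOn (fun a ↦ (e a).2) ((fun a ↦ (e a).1) ⁻¹' {k}) :=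
    fun a ha b hb hab ↦ e.injective (Prod.ext (ha.trans hb.symm) hab)
  calc ((fun a ↦ (e a).1) ⁻¹' {k}).ncard
      = ((fun a ↦ (e a).2) '' ((fun a ↦ (e a).1) ⁻¹' {k})).ncard :=
        injOn_snd.ncard_image.symm
    _ ≤ Nat.card (Fin m) := Set.ncard_le_card _
    _ = m := Nat.card_fin m

end Colorings

section Multiples

variable {M I : Type*} [Monoid M] [Finite M] [Finite I]

theorem exists_ceilDiv_le_ncard_setOf_eq_smul (w u : I → M) :
    ∃ a : M, {i | IsUnit (w i)}.ncard ⌈/⌉ Nat.card M ≤ {i | u i = (a • w) i}.ncard := by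
  obtain ⟨a, ha⟩ := exists_ceilDiv_le_ncard_fiber
    fun i : {i | IsUnit (w i)} ↦ u i * ↑(i.2.unit⁻¹)
  refine ⟨a, ha.trans ?_⟩
  rw [← Set.ncard_image_of_injective _ Subtype.val_injective]
  refine Set.ncard_le_ncard ?_
  rintro _ ⟨i, rfl, rfl⟩
  simp [mul_assoc]

theorem exists_forall_ncard_setOf_eq_smul_le_ceilDiv (w : I → M) :
    ∃ u : I → M, ∀ a : M,
      {i | u i = (a • w) i}.ncard ≤ {i | IsUnit (w i)}.ncard ⌈/⌉ Nat.card M := by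
  classical
  obtain ⟨f, hf⟩ := exists_forall_ncard_fiber_le_ceilDiv (α := {i | IsUnit (w i)}) (κ := M)
  refine ⟨fun i ↦ if h : IsUnit (w i) then f ⟨i, h⟩ * w i else 1, fun a ↦ ?_⟩
  refine le_trans ?_ (hf a)
  rw [← Set.ncard_image_of_injective _ Subtype.val_injective]
  refine Set.ncard_le_ncard fun i hi ↦ ?_
  by_cases h : IsUnit (w i)
  · have hmul : f ⟨i, h⟩ * w i = a * w i := by simpa [h] using hi
    exact ⟨⟨i, h⟩, h.mul_right_cancel hmul, rfl⟩
  · have hone : 1 = a * w i := by simpa [h] using hi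
    exact absurd (IsUnit.of_mul_eq_one_right a hone.symm) h

end Multiples

theorem covRad_setOf_exists_eq_smul {q : ℕ} [NeZero q] {I : Type*} [Finite I] (w : I → ZMod q) :
    covRad {c : I → ZMod q | ∃ a : ZMod q, c = a • w} =
      Nat.card I - {i | IsUnit (w i)}.ncard ⌈/⌉ q := by
  refine covRad_eq_card_sub (fun u ↦ ?_) ?_
  · obtain ⟨a, ha⟩ := exists_ceilDiv_le_ncard_setOf_eq_smul w u
    rw [Nat.card_zmod] at ha
    exact ⟨a • w, ⟨a, rfl⟩, ha⟩
  · obtain ⟨u, hu⟩ := exists_forall_ncard_setOf_eq_smul_le_ceilDiv w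
    refine ⟨u, ?_⟩
    rintro _ ⟨a, rfl⟩
    simpa only [Nat.card_zmod] using hu a

theorem wrep_finProdFinEquiv {q n : ℕ} (j : Fin (q - 1)) (k : Fin n) :
    wrep q n (finProdFinEquiv (j, k)) = ((j + 1 : ℕ) : ZMod q) := by
  rw [wrep, finProdFinEquiv_apply_val, Nat.add_mul_div_left _ _ k.pos,
    Nat.div_eq_of_lt k.isLt, zero_add]

theorem ncard_isUnit_natCast_add_one {q : ℕ} (hq : 2 ≤ q) :
    {j : Fin (q - 1) | IsUnit ((j + 1 : ℕ) : ZMod q)}.ncard = q.totient := by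
  have injective_add_one : Function.Injective fun j : Fin (q - 1) ↦ (j + 1 : ℕ) :=
    (add_left_injective 1).comp Fin.val_injective
  rw [← Set.ncard_image_of_injective _ injective_add_one, Nat.totient_eq_card_lt_and_coprime,
    Nat.card_coe_set_eq]
  congr 1
  ext m
  simp only [ZMod.isUnit_iff_coprime, Set.mem_image, Set.mem_ofPred_eq]
  constructor
  · rintro ⟨j, hj, rfl⟩
    exact ⟨by lia, hj.symm⟩
  · rintro ⟨hm, hcop⟩
    have m_ne_zero : m ≠ 0 := by
      rintro rfl
      rw [Nat.coprime_zero_right] at hcop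
      lia
    have m_eq : m - 1 + 1 = m := Nat.succ_pred_eq_of_ne_zero m_ne_zero
    exact ⟨⟨m - 1, by lia⟩, m_eq ▸ hcop.symm, m_eq⟩

theorem ncard_isUnit_wrep {q : ℕ} (hq : 2 ≤ q) (n : ℕ) :
    {i | IsUnit (wrep q n i)}.ncard = q.totient * n := by
  have preimage_eq : finProdFinEquiv ⁻¹' {i | IsUnit (wrep q n i)} =
      {j : Fin (q - 1) | IsUnit ((j + 1 : ℕ) : ZMod q)} ×ˢ Set.univ := by
    ext ⟨j, k⟩
    simp only [Set.mem_preimage, Set.mem_ofPred_eq, wrep_finProdFinEquiv, Set.mem_prod,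
      Set.mem_univ, and_true]
  rw [← Set.ncard_preimage_of_injective_subset_range finProdFinEquiv.injective
    (by simp only [Equiv.range_eq_univ, Set.subset_univ]), preimage_eq, Set.ncard_prod,
    ncard_isUnit_natCast_add_one hq, Set.ncard_univ, Nat.card_fin]

theorem sub_one_mul_div_add_ceilDiv {q : ℕ} (hq : 0 < q) (p : ℕ) :
    (q - 1) * p / q + p ⌈/⌉ q = p := by
  rcases p with _ | x
  · simp
  have lt_mul : x < q * (x + 1) := by nlinarith
  have div_eq : (q - 1) * (x + 1) / q = x + 1 - (x / q + 1) := by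
    rw [Nat.sub_one_mul, Nat.mul_sub_div x q (x + 1) lt_mul]
  have ceilDiv_eq : (x + 1) ⌈/⌉ q = x / q + 1 := by
    rw [Nat.ceilDiv_eq_add_pred_div, Nat.add_right_comm, Nat.add_sub_cancel,
      Nat.add_div_right _ hq]
  have := Nat.div_le_self x q
  lia

theorem covRad_wrep_code_general (q n : ℕ) (hq : 2 ≤ q) :
    covRad {w : Fin ((q - 1) * n) → ZMod q | ∃ a : ZMod q, w = a • wrep q n} =
      (q - 1) * Nat.totient q * n / q + (q - 1 - Nat.totient q) * n := by
  have : NeZero q := ⟨by lia⟩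
  rw [covRad_setOf_exists_eq_smul, Nat.card_fin, ncard_isUnit_wrep hq, mul_assoc,
    Nat.sub_mul (q - 1)]
  have totient_mul_le : q.totient * n ≤ (q - 1) * n :=
    Nat.mul_le_mul_right n (Nat.le_sub_one_of_lt (Nat.totient_lt q hq))
  refine Nat.sub_eq_of_eq_add ?_
  rw [add_right_comm, sub_one_mul_div_add_ceilDiv (NeZero.pos q),
    Nat.add_sub_cancel' totient_mul_le]

/-- For even `q`, the covering radius of the code generated by the word
`(1,…,1, 2,…,2, …, q-1,…,q-1)` (each block of length `n`) equals
`⌊(q-1)·φ(q)·n/q⌋ + (q-1-φ(q))·n`. -/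
theorem covRad_wrep_code (q n : ℕ) (hq : 2 ≤ q) (hqe : Even q) (hn : 1 ≤ n) :
    covRad {w : Fin ((q - 1) * n) → ZMod q | ∃ a : ZMod q, w = a • wrep q n} =
      (q - 1) * Nat.totient q * n / q + (q - 1 - Nat.totient q) * n :=
  covRad_wrep_code_general q n hq
end

section
/- Let q ≥ 2 be an even integer and let 2 ≤ u ≤ r ≤ k. Then, as an inequality of real numbers, R(M_{k+1,u}) ≤ ((k-r+1)·(q-1)·φ(q) + (q² - q - φ(q))·q^r·(q^{k-r+1} - 1))/(q·(q-1)²) + R(M_{r,u}). -/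
/-- `Wset q k u` is the set of columns of the `ZMod q`-MacDonald code `M_{k,u}`: the columns
`v ∈ Vset q k` having a nonzero coordinate at some index `i < k - u`. -/
def Wset (q k u : ℕ) : Set (Fin k → ZMod q) :=
  {v | v ∈ Vset q k ∧ ∃ i : Fin k, (i : ℕ) < k - u ∧ v i ≠ 0}

/-- The `ZMod q`-MacDonald code `M_{k,u}`: the words obtained by evaluating a linear form
`x` at all columns `v ∈ Wset q k u`. -/
def MacDonaldCode (q k u : ℕ) : Set (↥(Wset q k u) → ZMod q) :=
  {c | ∃ x : Fin k → ZMod q, c = fun v : ↥(Wset q k u) => ∑ i, x i * v.1 i}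

/-!
Split the columns of `M_{j+1,u}` by their first coordinate. Those starting with `0` are the columns
of `M_{j,u}`, so some form `x` in the other coordinates errs on at most `R(M_{j,u})` of them. The
first coefficient `t` of a codeword extending `x` is still free. If a column starts with a unit,
exactly one `t` matches the received word there, so averaging over the `q` choices of `t` saves
`1 / q` of an error for each such column. Summing the resulting bound on
`R(M_{j+1,u}) - R(M_{j,u})` over `j` gives the theorem.
-/

open Matrix Set
open scoped Finset

section CoveringRadius

variable {q : ℕ} {I : Type*} [Finite I] {C : Set (I → ZMod q)}

theorem bddAbove_sInf_hdist (hC : C.Nonempty) :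
    BddAbove {r | ∃ w : I → ZMod q, r = sInf {e | ∃ c ∈ C, e = hdist w c}} := by
  obtain ⟨c, hc⟩ := hC
  refine ⟨Nat.card I, ?_⟩
  rintro _ ⟨w, rfl⟩
  calc sInf {e | ∃ c ∈ C, e = hdist w c} ≤ hdist w c := Nat.sInf_le ⟨c, hc, rfl⟩
    _ ≤ Nat.card I := ncard_le_card _

theorem exists_hdist_le_covRad (hC : C.Nonempty) (w : I → ZMod q) :
    ∃ c ∈ C, hdist w c ≤ covRad C := by
  obtain ⟨c₀, hc₀⟩ := hC
  obtain ⟨c, hc, hdist_eq⟩ : sInf {e | ∃ c ∈ C, e = hdist w c} ∈ {e | ∃ c ∈ C, e = hdist w c} :=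
    Nat.sInf_mem ⟨_, c₀, hc₀, rfl⟩
  exact ⟨c, hc, hdist_eq ▸ le_csSup (bddAbove_sInf_hdist ⟨c₀, hc₀⟩) ⟨w, rfl⟩⟩

theorem exists_forall_covRad_le_hdist (hC : C.Nonempty) :
    ∃ w : I → ZMod q, ∀ c ∈ C, covRad C ≤ hdist w c := by
  obtain ⟨w, hw⟩ : covRad C ∈ {r | ∃ w : I → ZMod q, r = sInf {e | ∃ c ∈ C, e = hdist w c}} :=
    Nat.sSup_mem ⟨_, 0, rfl⟩ (bddAbove_sInf_hdist hC)
  exact ⟨w, fun c hc => hw ▸ Nat.sInf_le ⟨c, hc, rfl⟩⟩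

theorem hdist_le_hdist_comp_add {J : Type*} [Finite J] (e : J → I) (x y : I → ZMod q) :
    hdist x y ≤ hdist (x ∘ e) (y ∘ e) + {i ∈ (range e)ᶜ | x i ≠ y i}.ncard := by
  have subset_union : {i | x i ≠ y i} ⊆
      e '' {k | (x ∘ e) k ≠ (y ∘ e) k} ∪ {i ∈ (range e)ᶜ | x i ≠ y i} := by
    intro i hi
    by_cases hrange : i ∈ range e
    · obtain ⟨k, rfl⟩ := hrange
      exact .inl ⟨k, hi, rfl⟩
    · exact .inr ⟨hrange, hi⟩
  calc hdist x y
      ≤ (e '' {k | (x ∘ e) k ≠ (y ∘ e) k}).ncard + {i ∈ (range e)ᶜ | x i ≠ y i}.ncard :=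
        (ncard_le_ncard subset_union).trans (ncard_union_le _ _)
    _ ≤ hdist (x ∘ e) (y ∘ e) + {i ∈ (range e)ᶜ | x i ≠ y i}.ncard :=
        Nat.add_le_add_right (ncard_image_le (toFinite _)) _

end CoveringRadius

section Averaging

variable {R : Type*} [Ring R] [Fintype R]

open Classical in
theorem card_ne_mul_add_add_ite_isUnit_le (w a s : R) :
    #{t : R | w ≠ t * a + s} + (if IsUnit a then 1 else 0) ≤ Fintype.card R := by
  split_ifs with ha
  · obtain ⟨b, rfl⟩ := ha
    refine Finset.card_lt_univ_of_notMem (x := (w - s) * ↑b⁻¹) ?_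
    simp
  · exact Finset.card_le_univ _

theorem sum_ncard_ne_mul_add_add_ncard_isUnit_le {I : Type*} {N : Set I} (hN : N.Finite)
    (w a s : I → R) :
    ∑ t : R, {i ∈ N | w i ≠ t * a i + s i}.ncard + {i ∈ N | IsUnit (a i)}.ncard ≤
      Fintype.card R * N.ncard := by
  classical
  lift N to Finset I using hN
  simp only [Finset.mem_coe, ← Finset.coe_filter, ncard_coe_finset]
  calc ∑ t : R, #{i ∈ N | w i ≠ t * a i + s i} + #{i ∈ N | IsUnit (a i)}
      = ∑ i ∈ N, (#{t : R | w i ≠ t * a i + s i} + if IsUnit (a i) then 1 else 0) := by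
        rw [Finset.sum_add_distrib, ← Finset.card_filter]
        congr 1
        exact Finset.sum_card_bipartiteAbove_eq_sum_card_bipartiteBelow _
    _ ≤ ∑ _i ∈ N, Fintype.card R :=
        Finset.sum_le_sum fun i _ => card_ne_mul_add_add_ite_isUnit_le (w i) (a i) (s i)
    _ = Fintype.card R * #N := by rw [Finset.sum_const, smul_eq_mul, mul_comm]

end Averaging

section ColumnCode

variable {q : ℕ}

/-- The linear code over `ZMod q` generated by the rows of the matrix with column set `S`. Its words
are indexed by the columns themselves, as in `MacDonaldCode`. -/
def columnCode {ι : Type*} [Fintype ι] (S : Set (ι → ZMod q)) : Set (S → ZMod q) :=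
  {c | ∃ x : ι → ZMod q, c = fun v : S => x ⬝ᵥ v.1}

theorem columnCode_nonempty {ι : Type*} [Fintype ι] (S : Set (ι → ZMod q)) :
    (columnCode S).Nonempty :=
  ⟨_, 0, rfl⟩

theorem macDonaldCode_eq_columnCode (k u : ℕ) : MacDonaldCode q k u = columnCode (Wset q k u) :=
  rfl

variable [NeZero q] {j : ℕ}

/-- The word `w` is farthest from the code, and `s` extends, by a form ignoring the first
coordinate, a codeword closest to `w` on the columns starting with `0`. -/
theorem exists_forall_covRad_columnCode_le (S : Set (Fin (j + 1) → ZMod q)) :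
    ∃ w s : S → ZMod q, ∀ t : ZMod q, covRad (columnCode S) ≤
      covRad (columnCode {v | vecCons 0 v ∈ S}) +
        {v : S | v.1 0 ≠ 0 ∧ w v ≠ t * v.1 0 + s v}.ncard := by
  obtain ⟨w, hw⟩ := exists_forall_covRad_le_hdist (columnCode_nonempty S)
  let consZero (v : {v | vecCons 0 v ∈ S}) : S := ⟨vecCons 0 v.1, v.2⟩
  obtain ⟨_, ⟨x, rfl⟩, hx⟩ := exists_hdist_le_covRad (columnCode_nonempty _) (w ∘ consZero)
  refine ⟨w, fun v => x ⬝ᵥ vecTail v.1, fun t => ?_⟩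
  let c (v : S) : ZMod q := vecCons t x ⬝ᵥ v.1
  have c_apply (v : S) : c v = t * v.1 0 + x ⬝ᵥ vecTail v.1 := cons_dotProduct t x v.1
  have c_comp : c ∘ consZero = fun v => x ⬝ᵥ v.1 := by
    ext v
    simp [c, consZero]
  have range_compl : (range consZero)ᶜ ⊆ {v : S | v.1 0 ≠ 0} := by
    rintro ⟨v, hv⟩ hrange (hv0 : v 0 = 0)
    have cons_tail : vecCons 0 (vecTail v) = v := hv0 ▸ cons_head_tail v
    exact hrange ⟨⟨vecTail v, by simpa [cons_tail] using hv⟩, Subtype.ext cons_tail⟩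
  calc covRad (columnCode S) ≤ hdist w c := hw c ⟨_, rfl⟩
    _ ≤ hdist (w ∘ consZero) (c ∘ consZero) + {v ∈ (range consZero)ᶜ | w v ≠ c v}.ncard :=
        hdist_le_hdist_comp_add consZero w c
    _ ≤ covRad (columnCode {v | vecCons 0 v ∈ S}) +
          {v : S | v.1 0 ≠ 0 ∧ w v ≠ t * v.1 0 + x ⬝ᵥ vecTail v.1}.ncard := by
        rw [c_comp]
        refine add_le_add hx (ncard_le_ncard fun v hv => ?_)
        exact ⟨range_compl hv.1, c_apply v ▸ hv.2⟩

theorem ncard_setOf_coe {α : Type*} (S : Set α) (P : α → Prop) :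
    {v : S | P v}.ncard = {v ∈ S | P v}.ncard :=
  (ncard_subtype (· ∈ S) {v | P v}).trans (congrArg ncard (inter_comm _ _))

theorem mul_covRad_columnCode_add_le [Nontrivial (ZMod q)] (S : Set (Fin (j + 1) → ZMod q)) :
    q * covRad (columnCode S) + {v ∈ S | IsUnit (v 0)}.ncard ≤
      q * {v ∈ S | v 0 ≠ 0}.ncard + q * covRad (columnCode {v | vecCons 0 v ∈ S}) := by
  obtain ⟨w, s, hws⟩ := exists_forall_covRad_columnCode_le S
  have sum_le : q * covRad (columnCode S) ≤ q * covRad (columnCode {v | vecCons 0 v ∈ S}) +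
      ∑ t : ZMod q, {v : S | v.1 0 ≠ 0 ∧ w v ≠ t * v.1 0 + s v}.ncard := by
    simpa [Finset.sum_add_distrib] using Finset.sum_le_sum fun t (_ : t ∈ Finset.univ) => hws t
  have errors_le := sum_ncard_ne_mul_add_add_ncard_isUnit_le
    (toFinite {v : S | v.1 0 ≠ 0}) w (fun v => v.1 0) s
  have isUnit_eq : {v ∈ {v : S | v.1 0 ≠ 0} | IsUnit (v.1 0)} = {v : S | IsUnit (v.1 0)} :=
    ext fun v => and_iff_right_of_imp IsUnit.ne_zero
  have isUnit_ncard : {v : S | IsUnit (v.1 0)}.ncard = {v ∈ S | IsUnit (v 0)}.ncard :=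
    ncard_setOf_coe S fun v => IsUnit (v 0)
  have ne_zero_ncard : {v : S | v.1 0 ≠ 0}.ncard = {v ∈ S | v 0 ≠ 0}.ncard :=
    ncard_setOf_coe S fun v => v 0 ≠ 0
  rw [isUnit_eq, isUnit_ncard, ne_zero_ncard, ZMod.card] at errors_le
  simp only [mem_ofPred_eq] at errors_le
  linarith

end ColumnCode

section Columns

variable {q j u : ℕ}

theorem ncard_setOf_isUnit [NeZero q] : {a : ZMod q | IsUnit a}.ncard = q.totient := by
  rw [← ZMod.card_units_eq_totient, ← Nat.card_eq_fintype_card]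
  exact ncard_range_of_injective Units.val_injective

theorem mem_Wset_succ_iff_of_head_ne_zero (hu : u ≤ j) {v : Fin (j + 1) → ZMod q} (hv : v 0 ≠ 0) :
    v ∈ Wset q (j + 1) u ↔ v ∈ Vset q (j + 1) :=
  and_iff_left ⟨0, Nat.sub_pos_of_lt (Nat.lt_succ_of_le hu), hv⟩

variable [Nontrivial (ZMod q)]

theorem mem_Vset_iff {v : Fin j → ZMod q} :
    v ∈ Vset q j ↔ ∃ m, v m = 1 ∧ ∀ i, m < i → v i = 0 := by
  constructor
  · rintro ⟨-, m, -, hlast, hone⟩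
    exact ⟨m, hone, hlast⟩
  · rintro ⟨m, hone, hlast⟩
    have hm : v m ≠ 0 := hone ▸ one_ne_zero
    exact ⟨fun hv => hm (congrFun hv m), m, hm, hlast, hone⟩

theorem vecCons_mem_Vset_iff {a : ZMod q} {v : Fin j → ZMod q} :
    vecCons a v ∈ Vset q (j + 1) ↔ a = 1 ∧ v = 0 ∨ v ∈ Vset q j := by
  simp [mem_Vset_iff, Fin.exists_fin_succ, Fin.forall_fin_succ, funext_iff]

theorem vecCons_zero_mem_Wset_iff {v : Fin j → ZMod q} :
    vecCons 0 v ∈ Wset q (j + 1) u ↔ v ∈ Wset q j u := by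
  have index_lt_iff (i : Fin j) : (i : ℕ) + 1 < j + 1 - u ↔ (i : ℕ) < j - u := by omega
  simp [Wset, vecCons_mem_Vset_iff, Fin.exists_fin_succ, index_lt_iff]

variable [NeZero q]

theorem ncard_Vset_succ_head_mem {A : Set (ZMod q)} (hA : 1 ∈ A) :
    {v ∈ Vset q (j + 1) | v 0 ∈ A}.ncard = A.ncard * (Vset q j).ncard + 1 := by
  have eq_image : {v ∈ Vset q (j + 1) | v 0 ∈ A} =
      Fin.consEquiv (fun _ => ZMod q) '' insert (1, 0) (A ×ˢ Vset q j) := by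
    rw [Equiv.image_eq_preimage_symm]
    ext v
    induction v using Fin.consCases with
    | _ a v =>
      change vecCons a v ∈ Vset q (j + 1) ∧ a ∈ A ↔ (a, v) = (1, 0) ∨ a ∈ A ∧ v ∈ Vset q j
      rw [vecCons_mem_Vset_iff, Prod.mk.injEq]
      grind
  have notMem : ((1, 0) : ZMod q × (Fin j → ZMod q)) ∉ A ×ˢ Vset q j := fun h => h.2.1 rfl
  rw [eq_image, ncard_image_of_injective _ (Equiv.injective _), ncard_insert_of_notMem notMem,
    ncard_prod]

theorem ncard_Vset : (Vset q j).ncard = ∑ i ∈ Finset.range j, q ^ i := by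
  induction j with
  | zero =>
    rw [Finset.sum_range_zero, ncard_eq_zero]
    exact eq_empty_of_forall_notMem fun v hv => hv.1 (Subsingleton.elim v 0)
  | succ j ih =>
    simpa [ih, geom_sum_succ] using ncard_Vset_succ_head_mem (j := j) (mem_univ (1 : ZMod q))

theorem ncard_Wset_head_ne_zero (hu : u ≤ j) : {v ∈ Wset q (j + 1) u | v 0 ≠ 0}.ncard = q ^ j := by
  have ncard_ne_zero : ({0}ᶜ : Set (ZMod q)).ncard = q - 1 := by
    rw [ncard_compl, ncard_singleton, Nat.card_zmod]
  calc {v ∈ Wset q (j + 1) u | v 0 ≠ 0}.ncard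
      = {v ∈ Vset q (j + 1) | v 0 ∈ ({0}ᶜ : Set (ZMod q))}.ncard :=
        congrArg ncard (ext fun v => and_congr_left (mem_Wset_succ_iff_of_head_ne_zero hu))
    _ = (q - 1) * (∑ i ∈ Finset.range j, q ^ i) + 1 := by
        rw [ncard_Vset_succ_head_mem one_ne_zero, ncard_ne_zero, ncard_Vset]
    _ = q ^ j := by
        obtain ⟨p, rfl⟩ := Nat.exists_eq_succ_of_ne_zero (NeZero.ne q)
        rw [mul_comm]
        exact geom_sum_mul_add p j

theorem ncard_Wset_head_isUnit (hu : u ≤ j) :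
    {v ∈ Wset q (j + 1) u | IsUnit (v 0)}.ncard =
      q.totient * (∑ i ∈ Finset.range j, q ^ i) + 1 := by
  calc {v ∈ Wset q (j + 1) u | IsUnit (v 0)}.ncard
      = {v ∈ Vset q (j + 1) | v 0 ∈ {a : ZMod q | IsUnit a}}.ncard :=
        congrArg ncard (ext fun v => and_congr_left fun hv =>
          mem_Wset_succ_iff_of_head_ne_zero hu (IsUnit.ne_zero hv))
    _ = q.totient * (∑ i ∈ Finset.range j, q ^ i) + 1 := by
        rw [ncard_Vset_succ_head_mem isUnit_one, ncard_setOf_isUnit, ncard_Vset]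

end Columns

section MacDonald

variable {q j u : ℕ}

theorem mul_covRad_macDonaldCode_succ_add_le (hq : 2 ≤ q) (hu : u ≤ j) :
    q * covRad (MacDonaldCode q (j + 1) u) +
        (q.totient * (∑ i ∈ Finset.range j, q ^ i) + 1) ≤
      q * q ^ j + q * covRad (MacDonaldCode q j u) := by
  have : Fact (1 < q) := ⟨hq⟩
  have columns_eq : {v : Fin j → ZMod q | vecCons 0 v ∈ Wset q (j + 1) u} = Wset q j u :=
    ext fun _ => vecCons_zero_mem_Wset_iff
  have bound := mul_covRad_columnCode_add_le (Wset q (j + 1) u)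
  rwa [← macDonaldCode_eq_columnCode, ncard_Wset_head_isUnit hu, ncard_Wset_head_ne_zero hu,
    columns_eq, ← macDonaldCode_eq_columnCode] at bound

theorem covRad_macDonaldCode_succ_le (hq : 2 ≤ q) (hu : u ≤ j) :
    (covRad (MacDonaldCode q (j + 1) u) : ℝ) ≤
      (q : ℝ) ^ j - q.totient * ((q : ℝ) ^ j - 1) / (q * (q - 1)) +
        covRad (MacDonaldCode q j u) := by
  have hq_pos : (0 : ℝ) < q := by positivity
  have hq_ne_one : (q : ℝ) ≠ 1 := by exact_mod_cast (by omega : q ≠ 1)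
  have bound : (q : ℝ) * covRad (MacDonaldCode q (j + 1) u) +
      (q.totient * (((q : ℝ) ^ j - 1) / (q - 1)) + 1) ≤
        q * (q : ℝ) ^ j + q * covRad (MacDonaldCode q j u) := by
    rw [← geom_sum_eq hq_ne_one]
    exact_mod_cast mul_covRad_macDonaldCode_succ_add_le hq hu
  refine le_of_mul_le_mul_left ?_ hq_pos
  have : (q : ℝ) - 1 ≠ 0 := sub_ne_zero.mpr hq_ne_one
  calc (q : ℝ) * covRad (MacDonaldCode q (j + 1) u)
      ≤ q * (q : ℝ) ^ j - q.totient * (((q : ℝ) ^ j - 1) / (q - 1)) +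
          q * covRad (MacDonaldCode q j u) := by linarith
    _ = q * ((q : ℝ) ^ j - q.totient * ((q : ℝ) ^ j - 1) / (q * (q - 1)) +
          covRad (MacDonaldCode q j u)) := by
        field_simp

theorem covRad_macdonald_le_general (q r d u : ℕ) (hq : 2 ≤ q) (hur : u ≤ r) :
    (covRad (MacDonaldCode q (r + d) u) : ℝ) ≤
      ((d : ℝ) * ((q : ℝ) - 1) * (q.totient : ℝ) +
          ((q : ℝ) ^ 2 - (q : ℝ) - (q.totient : ℝ)) * (q : ℝ) ^ r * ((q : ℝ) ^ d - 1)) /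
        ((q : ℝ) * ((q : ℝ) - 1) ^ 2) +
      (covRad (MacDonaldCode q r u) : ℝ) := by
  induction d with
  | zero => simp
  | succ d ih =>
    have hq_ne_zero : (q : ℝ) ≠ 0 := by positivity
    have hq_sub_one_ne_zero : (q : ℝ) - 1 ≠ 0 :=
      sub_ne_zero.mpr (by exact_mod_cast (by omega : q ≠ 1))
    refine (covRad_macDonaldCode_succ_le hq (hur.trans (Nat.le_add_right r d))).trans
      ((add_le_add_right ih _).trans_eq ?_)
    push_cast
    field_simp
    ring

end MacDonald

/-- For even `q` and `2 ≤ u ≤ r ≤ k`, the covering radius of the `ZMod q`-MacDonald code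
satisfies
`R(M_{k+1,u}) ≤ ((k-r+1)(q-1)φ(q) + (q²-q-φ(q))q^r(q^{k-r+1}-1))/(q(q-1)²) + R(M_{r,u})`. -/
theorem covRad_macdonald_le (q k u r : ℕ) (hq : 2 ≤ q) (hqe : Even q)
    (hu : 2 ≤ u) (hur : u ≤ r) (hrk : r ≤ k) :
    (covRad (MacDonaldCode q (k + 1) u) : ℝ) ≤
      (((k : ℝ) - (r : ℝ) + 1) * ((q : ℝ) - 1) * (Nat.totient q : ℝ) +
          ((q : ℝ) ^ 2 - (q : ℝ) - (Nat.totient q : ℝ)) * (q : ℝ) ^ r *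
            ((q : ℝ) ^ (k - r + 1) - 1)) /
        ((q : ℝ) * ((q : ℝ) - 1) ^ 2) +
      (covRad (MacDonaldCode q r u) : ℝ) := by
  obtain ⟨d, rfl⟩ := Nat.exists_eq_add_of_le hrk
  exact (covRad_macdonald_le_general q r (d + 1) u hq hur).trans_eq (by simp)
end
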